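/- For every e ∈ S^d and every a ∈ (0,π/2): Ũ_e(B(e,a)) = σ_d(B(e,2a)), and 2·ω_d·(2/π)^{2(d−1)}·a^d ≤ σ_d(B(e,2a)) ≤ 2^d·ω_{d+1}·a^d. -/

import Mathlib

open Real MeasureTheory Filter
open scoped RealInnerProductSpace ENNReal NNReal Topology

noncomputable section

/-- The ambient Euclidean space `ℝ^{d+1}`. -/
abbrev Esp (d : ℕ) : Type := EuclideanSpace ℝ (Fin (d + 1))

/-- The unit sphere `S^d ⊂ ℝ^{d+1}`. -/
def uSphere (d : ℕ) : Set (Esp d) := Metric.sphere 0 1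

/-- The spherical Lebesgue measure `σ_d` (d-dimensional Hausdorff measure restricted
to the unit sphere). -/
def sigmaMeas (d : ℕ) : Measure (Esp d) := (μH[(d : ℝ)]).restrict (uSphere d)

/-- `ω_{d+1} = σ_d(S^d)`, the total surface area of the unit sphere in `ℝ^{d+1}`. -/
def omegaTot (d : ℕ) : ℝ := (sigmaMeas d (uSphere d)).toReal

/-- `ω_d`, the `(d-1)`-dimensional measure of the unit sphere `S^{d-1} ⊂ ℝ^d`. -/
def omegaSm (d : ℕ) : ℝ :=
  (μH[((d : ℝ) - 1)] (Metric.sphere (0 : EuclideanSpace ℝ (Fin d)) 1)).toReal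

/-- `κ_d`, the volume of the unit ball in `ℝ^d`. -/
def kappaVol (d : ℕ) : ℝ :=
  (volume (Metric.ball (0 : EuclideanSpace ℝ (Fin d)) 1)).toReal

/-- The geodesic (angular) distance `d_s(x,y) = arccos ⟨x,y⟩` on the unit sphere. -/
def geo {d : ℕ} (x y : Esp d) : ℝ := Real.arccos ⟪x, y⟫

/-- The spherical ball (cap) `B(e,α)` of radius `α` centred at `e`. -/
def cap {d : ℕ} (e : Esp d) (α : ℝ) : Set (Esp d) := {x ∈ uSphere d | geo x e ≤ α}

/-- `K ∈ 𝒦̄_s^d`: a spherically convex body, i.e. the intersection of the unit sphere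
with a closed convex cone `C ≠ {0}` which is not a linear subspace. -/
def IsSphConvBody (d : ℕ) (K : Set (Esp d)) : Prop :=
  ∃ C : Set (Esp d), IsClosed C ∧ Convex ℝ C ∧
    (∀ x ∈ C, ∀ t : ℝ, 0 ≤ t → t • x ∈ C) ∧
    C ≠ {0} ∧ (∀ L : Submodule ℝ (Esp d), C ≠ (L : Set (Esp d))) ∧
    K = C ∩ uSphere d

/-- `K ∈ 𝒦_s^d`: a proper spherically convex body, i.e. the intersection of the unit
sphere with a line-free closed convex cone `C ≠ {0}`. -/
def IsProperSphConvBody (d : ℕ) (K : Set (Esp d)) : Prop :=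
  ∃ C : Set (Esp d), IsClosed C ∧ Convex ℝ C ∧
    (∀ x ∈ C, ∀ t : ℝ, 0 ≤ t → t • x ∈ C) ∧
    C ≠ {0} ∧ (∀ x ∈ C, x ≠ 0 → -x ∉ C) ∧
    K = C ∩ uSphere d

/-- The spherical mean width functional
`U₁(K) = (1/(2 ω_{d+1})) σ_d({x ∈ S^d : x^⊥ ∩ K ≠ ∅})`. -/
def U1 (d : ℕ) (K : Set (Esp d)) : ℝ :=
  (1 / (2 * omegaTot d)) * (sigmaMeas d {x | ∃ y ∈ K, ⟪x, y⟫ = 0}).toReal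

/-- `D(x) = ∫₀^x sin^{d-1} t dt`. -/
def Dfun (d : ℕ) (x : ℝ) : ℝ := ∫ t in (0:ℝ)..x, Real.sin t ^ (d - 1)

/-- `S_e = S^d ∩ e^⊥`, the great subsphere orthogonal to `e`. -/
def equator {d : ℕ} (e : Esp d) : Set (Esp d) := uSphere d ∩ {x | ⟪x, e⟫ = 0}

/-- The rotation invariant probability measure `σ⁰_{d-1}` on the great subsphere `S_e`. -/
def sigma0 (d : ℕ) (e : Esp d) : Measure (Esp d) :=
  (μH[((d : ℝ) - 1)] (equator e))⁻¹ • (μH[((d : ℝ) - 1)]).restrict (equator e)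

/-- The spherical radial function `α_{K,e}(u)`: the geodesic distance from `e` to the
boundary of `K` along the great circle through `e` in direction `u ∈ S_e`. -/
def sphRadial {d : ℕ} (K : Set (Esp d)) (e u : Esp d) : ℝ :=
  sSup {t : ℝ | 0 ≤ t ∧ t ≤ π / 2 ∧ (Real.cos t) • e + (Real.sin t) • u ∈ K}

/-- The set `-int(K*)`: points `e` of the sphere such that `K` is contained in the
open hemisphere centred at `e`. -/
def negIntPolar (d : ℕ) (K : Set (Esp d)) : Set (Esp d) :=
  {e ∈ uSphere d | ∀ x ∈ K, 0 < ⟪e, x⟫}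

/-- Points `e` of the sphere such that `K ⊆ {x : ⟨x,e⟩ ≥ 0}` (closed hemisphere). -/
def hemiCenters (d : ℕ) (K : Set (Esp d)) : Set (Esp d) :=
  {e ∈ uSphere d | ∀ x ∈ K, 0 ≤ ⟪x, e⟫}

/-- The `σ⁰_{d-1}`-average of `D ∘ α_{K,e}` over `S_e`. -/
def avgD (d : ℕ) (K : Set (Esp d)) (e : Esp d) : ℝ :=
  ∫ u, Dfun d (sphRadial K e u) ∂(sigma0 d e)

/-- The `L²(S_e, σ⁰_{d-1})`-deviation of `D ∘ α_{K,e}` from its average. -/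
def L2dev (d : ℕ) (K : Set (Esp d)) (e : Esp d) : ℝ :=
  Real.sqrt (∫ u, (Dfun d (sphRadial K e u) - avgD d K e) ^ 2 ∂(sigma0 d e))

/-- `Δ₂(K)`: infimum of the `L²` deviations over `e ∈ -int(K*)`. -/
def Delta2 (d : ℕ) (K : Set (Esp d)) : ℝ :=
  sInf (L2dev d K '' negIntPolar d K)

/-- `Δ₂*(K)`: infimum of the `L²` deviations over all `e` with
`K ⊆ {x : ⟨x,e⟩ ≥ 0}`. -/
def Delta2Star (d : ℕ) (K : Set (Esp d)) : ℝ :=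
  sInf (L2dev d K '' hemiCenters d K)

/-- The centred spherical inradius `r_e(K) = max{r ≥ 0 : B(e,r) ⊆ K}`. -/
def rcent (d : ℕ) (K : Set (Esp d)) (e : Esp d) : ℝ :=
  sSup {r : ℝ | 0 ≤ r ∧ cap e r ⊆ K}

/-- The centred spherical circumradius `R_e(K) = min{r ≥ 0 : K ⊆ B(e,r)}`. -/
def Rcent (d : ℕ) (K : Set (Esp d)) (e : Esp d) : ℝ :=
  sInf {r : ℝ | 0 ≤ r ∧ K ⊆ cap e r}

/-- The spherical inradius `Σ_r(K) = max{r_e(K) : e ∈ K}`. -/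
def SigmaR (d : ℕ) (K : Set (Esp d)) : ℝ :=
  sSup (rcent d K '' K)

/-- The deviation functional `ϑ_r(K) = min{R_e(K) - r_e(K) : e ∈ K, r_e(K) = Σ_r(K)}`. -/
def thetaR (d : ℕ) (K : Set (Esp d)) : ℝ :=
  sInf ((fun e => Rcent d K e - rcent d K e) '' {e ∈ K | rcent d K e = SigmaR d K})

/-- `Ũ_e(K) = σ_d({x ∈ S^d : (x-e)^⊥ ∩ K ≠ ∅})`. -/
def Utilde (d : ℕ) (e : Esp d) (K : Set (Esp d)) : ℝ :=
  (sigmaMeas d {x | ∃ y ∈ K, ⟪x - e, y⟫ = 0}).toReal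

/-- The spherical Hausdorff distance `δ_s`, based on the geodesic metric. -/
def sphHausdorff (d : ℕ) (K L : Set (Esp d)) : ℝ :=
  max (⨆ x ∈ K, ⨅ y ∈ L, geo x y) (⨆ y ∈ L, ⨅ x ∈ K, geo x y)

/-- Continuity of a functional on `𝒦̄_s^d` with respect to the spherical Hausdorff
metric `δ_s`. -/
def SphContinuous (d : ℕ) (F : Set (Esp d) → ℝ) : Prop :=
  ∀ K, IsSphConvBody d K → ∀ ε > (0:ℝ), ∃ δ > (0:ℝ), ∀ L, IsSphConvBody d L →
    sphHausdorff d K L < δ → |F K - F L| < ε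

/-- A hitting functional: continuous, nonnegative, vanishing exactly on one-pointed
sets. -/
def IsHittingFunctional (d : ℕ) (Φ : Set (Esp d) → ℝ) : Prop :=
  SphContinuous d Φ ∧ (∀ K, IsSphConvBody d K → 0 ≤ Φ K) ∧
    (∀ K, IsSphConvBody d K → (Φ K = 0 ↔ ∃ p, K = {p}))

/-- A size functional: continuous, nonnegative, not identically zero, vanishing on
one-pointed sets. -/
def IsSizeFunctional (d : ℕ) (S : Set (Esp d) → ℝ) : Prop :=
  SphContinuous d S ∧ (∀ K, IsSphConvBody d K → 0 ≤ S K) ∧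
    (∃ K, IsSphConvBody d K ∧ S K ≠ 0) ∧
    (∀ p ∈ uSphere d, S ({p} : Set (Esp d)) = 0)

/-- The isoperimetric constant `τ(Φ,Σ,a) = inf{Φ(K) : K ∈ 𝒦̄_s^d, Σ(K) ≥ a}`. -/
def tauConst (d : ℕ) (Φ S : Set (Esp d) → ℝ) (a : ℝ) : ℝ :=
  sInf (Φ '' {K | IsSphConvBody d K ∧ a ≤ S K})

/-- The spherical convex hull of a set `V ⊆ S^d`: the intersection of the sphere with
the closed convex cone generated by `V`. -/
def sphConvHull (d : ℕ) (V : Set (Esp d)) : Set (Esp d) :=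
  {x ∈ uSphere d | ∃ y ∈ convexHull ℝ V, ∃ t : ℝ, 0 < t ∧ x = t • y}

/-- A spherical polytope: the intersection of the sphere with a finitely generated
(polyhedral) cone, which is also a spherically convex body. -/
def IsSphPolytope (d : ℕ) (P : Set (Esp d)) : Prop :=
  IsSphConvBody d P ∧ ∃ V : Finset (Esp d),
    (V : Set (Esp d)) ⊆ uSphere d ∧ P = sphConvHull d (V : Set (Esp d))

/-- The vertices (extreme points) of a spherical polytope. -/
def sphExtremePoints (d : ℕ) (P : Set (Esp d)) : Set (Esp d) :=
  {x ∈ P | x ∉ sphConvHull d (P \ {x})}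

/-- The boundary of `K` relative to the sphere. -/
def sphFrontier (d : ℕ) (K : Set (Esp d)) : Set (Esp d) :=
  {x ∈ K | ∀ ε > (0:ℝ), ∃ y ∈ uSphere d, y ∉ K ∧ dist y x < ε}

/-- The functions `h_m(t) = (-1)^{m+1} e^{-t} + 2 ∑_{i=0}^{⌊m/2⌋} t^{m-2i}/(m-2i)!`. -/
def hFun (m : ℕ) (t : ℝ) : ℝ :=
  (-1 : ℝ) ^ (m + 1) * Real.exp (-t) +
    2 * ∑ i ∈ Finset.range (m / 2 + 1), t ^ (m - 2 * i) / (Nat.factorial (m - 2 * i) : ℝ)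

/-!
If `y ⟂ x - e` then `y` makes the same angle with `x` and with `e`, so `∠(x, e) ≤ 2 ∠(y, e)`, with
equality for the midpoint of `x` and `e`. Hence the hyperplane bisecting `e` and `x` meets `B(e, a)`
exactly when `∠(x, e) ≤ 2a`.

For the upper bound, shrinking the projection to `eᗮ` by the factor `ρ ≤ 1` and lifting the result
back to the hemisphere around `e` is a `ρ`-Lipschitz map of the sphere onto a set containing
`B(e, ρ)`.

For the lower bound, the points at angle `t` from `e` form a sphere of radius `sin t`, and the
angle to `e` is asymptotically `1`-Lipschitz for the chordal distance at small scales. Eilenberg's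
inequality therefore gives `ω_d ∫₀^r sin^{d-1} ≤ σ_d(B(e, r))`; only this half of the
polar-coordinate formula survives for Mathlib's Hausdorff measures, which carry no normalising
constant. Jensen's inequality and `sin a ≥ 2a/π` bound the integral from below for `r = 2a`.
-/

section Eilenberg

variable {X Y : Type*} [EMetricSpace X] [MeasurableSpace X] [BorelSpace X]

lemma exists_cover_tsum_ediam_rpow_le {p : ℝ} (hp : 0 < p) {A : Set X} (hA : μH[p] A ≠ ∞)
    {r ε : ℝ≥0∞} (hr : r ≠ 0) (hε : ε ≠ 0) :
    ∃ t : ℕ → Set X, A ⊆ ⋃ i, t i ∧ (∀ i, t i ⊆ A) ∧ (∀ i, Metric.ediam (t i) ≤ r) ∧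
      ∑' i, Metric.ediam (t i) ^ p ≤ μH[p] A + ε := by
  have hlt : (⨅ (t : ℕ → Set X) (_ : A ⊆ ⋃ n, t n) (_ : ∀ n, Metric.ediam (t n) ≤ r),
      ∑' n, ⨆ _ : (t n).Nonempty, Metric.ediam (t n) ^ p) < μH[p] A + ε := by
    refine lt_of_le_of_lt ?_ (ENNReal.lt_add_right hA hε)
    rw [Measure.hausdorffMeasure_apply]
    exact le_iSup₂_of_le r (pos_iff_ne_zero.2 hr) le_rfl
  simp only [iInf_lt_iff] at hlt
  obtain ⟨t, hcov, hdiam, hsum⟩ := hlt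
  have hmono (i : ℕ) : Metric.ediam (t i ∩ A) ≤ Metric.ediam (t i) :=
    Metric.ediam_mono Set.inter_subset_left
  refine ⟨fun i => t i ∩ A, ?_, fun i => Set.inter_subset_right,
    fun i => (hmono i).trans (hdiam i), (ENNReal.tsum_le_tsum fun i => ?_).trans hsum.le⟩
  · rw [← Set.iUnion_inter]
    exact Set.subset_inter hcov subset_rfl
  · rcases (t i ∩ A).eq_empty_or_nonempty with hempty | hne
    · simp [hempty, hp]
    · exact (ENNReal.rpow_le_rpow (hmono i) hp.le).trans
        (le_iSup (fun _ : (t i).Nonempty => Metric.ediam (t i) ^ p) hne.left)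

lemma hausdorffMeasure_fiber_le_liminf {s : ℝ} {A : Set X} {f : X → Y}
    {E : ℕ → ℕ → Set X} {r : ℕ → ℝ≥0∞} (hr : Tendsto r atTop (𝓝 0))
    (hcov : ∀ n, A ⊆ ⋃ i, E n i) (hdiam : ∀ n i, Metric.ediam (E n i) ≤ r n)
    {T : ℕ → ℕ → Set Y} (hT : ∀ n i, f '' E n i ⊆ T n i) (y : Y) :
    μH[s] (A ∩ f ⁻¹' {y}) ≤
      liminf (fun n => ∑' i, (T n i).indicator (fun _ => Metric.ediam (E n i) ^ s) y) atTop := by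
  -- Count only the pieces meeting the fiber: `0 ^ 0 = 1` charges the others when `s = 0`.
  let I (n : ℕ) : Set ℕ := {i | y ∈ T n i}
  calc μH[s] (A ∩ f ⁻¹' {y})
      ≤ liminf (fun n => ∑' i : I n, Metric.ediam (E n i) ^ s) atTop := by
        refine Measure.hausdorffMeasure_le_liminf_tsum s _ r hr (fun n (i : I n) => E n i)
          (Eventually.of_forall fun n i => hdiam n i) (Eventually.of_forall fun n x hx => ?_)
        obtain ⟨i, hi⟩ := Set.mem_iUnion.1 (hcov n hx.1)
        exact Set.mem_iUnion.2 ⟨⟨i, hT n i ⟨x, hi, hx.2⟩⟩, hi⟩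
    _ = _ := by
        congr 1 with n
        rw [tsum_subtype (I n) fun i => Metric.ediam (E n i) ^ s]
        rfl

variable [PseudoEMetricSpace Y] [MeasurableSpace Y] {ν : Measure Y} {s t : ℝ} {A : Set X}
  {f : X → Y}

theorem lintegral_hausdorffMeasure_fiber_le (hs : 0 ≤ s) (ht : 0 < t)
    (hν : ∀ B, ν B ≤ Metric.ediam B ^ t) (hA : μH[s + t] A ≠ ∞) {C : ℝ≥0} {δ : ℝ≥0∞}
    (hδ : δ ≠ 0) (hf : ∀ x ∈ A, ∀ y ∈ A, edist x y ≤ δ → edist (f x) (f y) ≤ C * edist x y) :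
    ∫⁻ y, μH[s] (A ∩ f ⁻¹' {y}) ∂ν ≤ (C : ℝ≥0∞) ^ t * μH[s + t] A := by
  have hinv (n : ℕ) : (n : ℝ≥0∞)⁻¹ ≠ 0 := by simp
  choose E hcov hsub hdiam hsum using fun n : ℕ => exists_cover_tsum_ediam_rpow_le
    (add_pos_of_nonneg_of_pos hs ht) hA (r := min δ (n : ℝ≥0∞)⁻¹) (by simp [hδ]) (hinv n)
  -- Measurable hulls of the images, because Fatou's lemma needs measurable integrands.
  let T (n i : ℕ) : Set Y := toMeasurable ν (f '' E n i)
  let g (n : ℕ) (y : Y) : ℝ≥0∞ := ∑' i, (T n i).indicator (fun _ => Metric.ediam (E n i) ^ s) y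
  have hmeas (n i : ℕ) : Measurable ((T n i).indicator fun _ => Metric.ediam (E n i) ^ s) :=
    measurable_const.indicator (measurableSet_toMeasurable _ _)
  have hνT (n i : ℕ) : ν (T n i) ≤ (C * Metric.ediam (E n i)) ^ t := by
    rw [measure_toMeasurable]
    refine (hν _).trans (ENNReal.rpow_le_rpow (Metric.ediam_le ?_) ht.le)
    rintro _ ⟨x, hx, rfl⟩ _ ⟨y, hy, rfl⟩
    have hxy := Metric.edist_le_ediam_of_mem hx hy
    calc edist (f x) (f y) ≤ C * edist x y := hf x (hsub n i hx) y (hsub n i hy)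
          (hxy.trans ((hdiam n i).trans (min_le_left _ _)))
      _ ≤ C * Metric.ediam (E n i) := by gcongr
  have hint (n : ℕ) : ∫⁻ y, g n y ∂ν ≤ (C : ℝ≥0∞) ^ t * (μH[s + t] A + (n : ℝ≥0∞)⁻¹) := by
    calc ∫⁻ y, g n y ∂ν = ∑' i, Metric.ediam (E n i) ^ s * ν (T n i) := by
          simp only [g, lintegral_tsum fun i => (hmeas n i).aemeasurable,
            lintegral_indicator_const (measurableSet_toMeasurable _ _), T]
      _ ≤ ∑' i, (C : ℝ≥0∞) ^ t * Metric.ediam (E n i) ^ (s + t) := by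
          refine ENNReal.tsum_le_tsum fun i => (mul_le_mul_right (hνT n i) _).trans_eq ?_
          rw [ENNReal.mul_rpow_of_nonneg _ _ ht.le, ENNReal.rpow_add_of_nonneg _ _ hs ht.le]
          ring
      _ ≤ _ := by
          rw [ENNReal.tsum_mul_left]
          gcongr
          exact hsum n
  calc ∫⁻ y, μH[s] (A ∩ f ⁻¹' {y}) ∂ν
      ≤ ∫⁻ y, liminf (fun n => g n y) atTop ∂ν :=
        lintegral_mono <| hausdorffMeasure_fiber_le_liminf ENNReal.tendsto_inv_nat_nhds_zero hcov
          (fun n i => (hdiam n i).trans (min_le_right _ _)) fun n i => subset_toMeasurable _ _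
    _ ≤ liminf (fun n => ∫⁻ y, g n y ∂ν) atTop :=
        lintegral_liminf_le fun n => Measurable.tsum (hmeas n)
    _ ≤ liminf (fun n : ℕ => (C : ℝ≥0∞) ^ t * (μH[s + t] A + (n : ℝ≥0∞)⁻¹)) atTop :=
        liminf_le_liminf (Eventually.of_forall hint)
    _ = (C : ℝ≥0∞) ^ t * μH[s + t] A := by
        refine Tendsto.liminf_eq (ENNReal.Tendsto.const_mul ?_ (Or.inr (by finiteness)))
        simpa using tendsto_const_nhds.add ENNReal.tendsto_inv_nat_nhds_zero

theorem lintegral_hausdorffMeasure_fiber_le_of_forall_one_lt (hs : 0 ≤ s) (ht : 0 < t)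
    (hν : ∀ B, ν B ≤ Metric.ediam B ^ t)
    (hf : ∀ C : ℝ≥0, 1 < C → ∃ δ : ℝ≥0∞, δ ≠ 0 ∧
      ∀ x ∈ A, ∀ y ∈ A, edist x y ≤ δ → edist (f x) (f y) ≤ C * edist x y) :
    ∫⁻ y, μH[s] (A ∩ f ⁻¹' {y}) ∂ν ≤ μH[s + t] A := by
  rcases eq_or_ne (μH[s + t] A) ∞ with hA | hA
  · exact hA ▸ le_top
  have hbound : ∀ᶠ C : ℝ≥0 in 𝓝[>] 1,
      ∫⁻ y, μH[s] (A ∩ f ⁻¹' {y}) ∂ν ≤ (C : ℝ≥0∞) ^ t * μH[s + t] A := by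
    filter_upwards [self_mem_nhdsWithin] with C hC
    obtain ⟨δ, hδ, hfδ⟩ := hf C hC
    exact lintegral_hausdorffMeasure_fiber_le hs ht hν hA hδ hfδ
  refine ge_of_tendsto ?_ hbound
  have hlim : Tendsto (fun C : ℝ≥0 => (C : ℝ≥0∞) ^ t) (𝓝 1) (𝓝 1) := by
    have : Continuous fun C : ℝ≥0 => (C : ℝ≥0∞) ^ t := by fun_prop
    simpa using this.tendsto 1
  simpa using ENNReal.Tendsto.mul_const (hlim.mono_left nhdsWithin_le_nhds) (Or.inr hA)

end Eilenberg

section SineIntegral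

lemma sub_mul_average_pow_le_integral_pow {f : ℝ → ℝ} {a b : ℝ} (hab : a < b)
    (hf : ContinuousOn f (Set.Icc a b)) (hf0 : ∀ t ∈ Set.Icc a b, 0 ≤ f t) (n : ℕ) :
    (b - a) * ((∫ t in a..b, f t) / (b - a)) ^ n ≤ ∫ t in a..b, f t ^ n := by
  have hJensen : (⨍ t in Set.Ioc a b, f t) ^ n ≤ ⨍ t in Set.Ioc a b, f t ^ n := by
    refine (convexOn_pow n).map_set_average_le (continuous_pow n).continuousOn isClosed_Ici
      (by simp [hab]) (by simp) ?_ (hf.integrableOn_Icc.mono_set Set.Ioc_subset_Icc_self)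
      ((hf.pow n).integrableOn_Icc.mono_set Set.Ioc_subset_Icc_self)
    exact (ae_restrict_iff' measurableSet_Ioc).2
      (Eventually.of_forall fun t ht => hf0 t (Set.Ioc_subset_Icc_self ht))
  rw [← Set.uIoc_of_le hab.le, interval_average_eq_div, interval_average_eq_div] at hJensen
  rwa [← le_div_iff₀' (sub_pos.2 hab)]

lemma two_mul_pow_le_integral_sin_pow (n : ℕ) {a : ℝ} (ha : 0 < a) (ha' : a ≤ π / 2) :
    2 * (2 / π) ^ (2 * n) * a ^ (n + 1) ≤ ∫ t in (0 : ℝ)..2 * a, sin t ^ n := by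
  have hmean : (2 / π) ^ 2 * a ≤ (1 - cos (2 * a)) / (2 * a) := by
    have hJordan : 2 / π * a ≤ sin a := mul_le_sin ha.le ha'
    have hsq : (2 / π * a) ^ 2 ≤ sin a ^ 2 := by gcongr
    rw [le_div_iff₀ (by positivity), cos_two_mul, cos_sq']
    linarith
  calc 2 * (2 / π) ^ (2 * n) * a ^ (n + 1) = 2 * a * ((2 / π) ^ 2 * a) ^ n := by
        rw [pow_mul, mul_pow]
        ring
    _ ≤ 2 * a * ((1 - cos (2 * a)) / (2 * a)) ^ n := by gcongr
    _ ≤ ∫ t in (0 : ℝ)..2 * a, sin t ^ n := by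
        simpa [integral_sin] using sub_mul_average_pow_le_integral_pow (by linarith : 0 < 2 * a)
          continuousOn_sin
          (fun t ht => sin_nonneg_of_nonneg_of_le_pi ht.1 (by linarith [ht.2])) n

end SineIntegral

section ContDiff

variable {E F : Type*} [NormedAddCommGroup E] [NormedSpace ℝ E] [MeasurableSpace E] [BorelSpace E]
  [NormedAddCommGroup F] [NormedSpace ℝ F] [FiniteDimensional ℝ F] [MeasurableSpace F]
  [BorelSpace F]

lemma hausdorffMeasure_finrank_image_lt_top {f : F → E}
    (hf : ContDiff ℝ 1 f) {K : Set F} (hK : IsCompact K) :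
    μH[Module.finrank ℝ F] (f '' K) < ∞ := by
  obtain ⟨C, hC⟩ := hf.locallyLipschitz.locallyLipschitzOn.exists_lipschitzOnWith_of_compact hK
  exact (hC.hausdorffMeasure_image_le (Module.finrank ℝ F).cast_nonneg).trans_lt
    (ENNReal.mul_lt_top (by finiteness) hK.measure_lt_top)

end ContDiff

section SphereMeasure

variable {E : Type*} [NormedAddCommGroup E] [InnerProductSpace ℝ E]

lemma sphere_inter_inner_nonpos_subset_image_stereoInvFunAux {v : E} (hv : ‖v‖ = 1) :
    {x ∈ Metric.sphere (0 : E) 1 | ⟪v, x⟫ ≤ 0} ⊆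
      (fun w : (ℝ ∙ v)ᗮ => stereoInvFunAux v w) ''
        (stereoToFun v '' {x ∈ Metric.sphere (0 : E) 1 | ⟪v, x⟫ ≤ 0}) := by
  rintro x ⟨hx, hvx⟩
  have hxv : x ≠ v := by
    rintro rfl
    rw [real_inner_self_eq_norm_sq, hv] at hvx
    norm_num at hvx
  exact ⟨_, ⟨x, ⟨hx, hvx⟩, rfl⟩, congrArg Subtype.val (stereo_left_inv hv (x := ⟨x, hx⟩) hxv)⟩

variable [MeasurableSpace E] [BorelSpace E]

lemma hausdorffMeasure_sphere_inter_inner_nonpos_lt_top {n : ℕ}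
    (hn : Module.finrank ℝ E = n + 1) {v : E} (hv : ‖v‖ = 1) :
    μH[n] {x ∈ Metric.sphere (0 : E) 1 | ⟪v, x⟫ ≤ 0} < ∞ := by
  have : FiniteDimensional ℝ E := .of_finrank_pos (by lia)
  have : Fact (Module.finrank ℝ E = n + 1) := ⟨hn⟩
  have hclosed : IsClosed {x : E | ⟪v, x⟫ ≤ 0} := isClosed_le (by fun_prop) continuous_const
  have hcompact : IsCompact {x ∈ Metric.sphere (0 : E) 1 | ⟪v, x⟫ ≤ 0} :=
    (isCompact_sphere 0 1).inter_right hclosed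
  have hK : IsCompact (stereoToFun v '' {x ∈ Metric.sphere (0 : E) 1 | ⟪v, x⟫ ≤ 0}) :=
    hcompact.image_of_continuousOn (continuousOn_stereoToFun.mono fun x hx h => by
      have : ⟪v, x⟫ = 1 := h
      linarith [hx.2])
  have hsmooth : ContDiff ℝ 1 fun w : (ℝ ∙ v)ᗮ => stereoInvFunAux v w :=
    contDiff_stereoInvFunAux.comp (ℝ ∙ v)ᗮ.subtypeL.contDiff
  have hfin := hausdorffMeasure_finrank_image_lt_top hsmooth hK
  rw [Submodule.finrank_orthogonal_span_singleton (n := n)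
    (norm_ne_zero_iff.1 (by simp [hv]))] at hfin
  exact (measure_mono (sphere_inter_inner_nonpos_subset_image_stereoInvFunAux hv)).trans_lt hfin

lemma hausdorffMeasure_sphere_lt_top {n : ℕ} (hn : Module.finrank ℝ E = n + 1) :
    μH[n] (Metric.sphere (0 : E) 1) < ∞ := by
  have : Nontrivial E := Module.nontrivial_of_finrank_pos (R := ℝ) (by lia)
  obtain ⟨v, hv⟩ := exists_norm_eq E zero_le_one
  refine lt_of_le_of_lt (measure_mono fun x hx => ?_) (measure_union_lt_top
    (hausdorffMeasure_sphere_inter_inner_nonpos_lt_top hn hv)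
    (hausdorffMeasure_sphere_inter_inner_nonpos_lt_top hn (v := -v) (by rwa [norm_neg])))
  rcases le_total ⟪v, x⟫ 0 with h | h
  · exact Or.inl ⟨hx, h⟩
  · exact Or.inr ⟨hx, by simpa using h⟩

end SphereMeasure

section UnitSphere

open InnerProductGeometry

variable {E : Type*} [NormedAddCommGroup E] [InnerProductSpace ℝ E]

/-- The closed ball of radius `r` around the unit vector `e` for the angular metric of the unit
sphere of an arbitrary real inner product space. -/
def geodesicBall (e : E) (r : ℝ) : Set E := {x ∈ Metric.sphere 0 1 | angle x e ≤ r}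

lemma geodesicBall_subset_sphere (e : E) (r : ℝ) : geodesicBall e r ⊆ Metric.sphere 0 1 :=
  fun _ hx => hx.1

lemma angle_eq_angle_of_inner_sub_eq_zero {x e y : E} (hxe : ‖x‖ = ‖e‖) (h : ⟪x - e, y⟫ = 0) :
    angle x y = angle y e := by
  rw [inner_sub_left, sub_eq_zero] at h
  rw [angle_comm y e, angle, angle, h, hxe]

lemma angle_add_eq_half {x e : E} (hxe : ‖x‖ = ‖e‖) (he : e ≠ 0) :
    angle (x + e) e = angle x e / 2 := by
  have hsymm : angle x (x + e) = angle (x + e) e :=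
    angle_eq_angle_of_inner_sub_eq_zero hxe
      (by rw [real_inner_comm, real_inner_add_sub_eq_zero_iff, hxe])
  have hsum := angle_eq_angle_add_add_angle_add x he
  rw [hsymm, angle_comm e] at hsum
  linarith

lemma exists_mem_geodesicBall_inner_sub_eq_zero_iff {x e : E} (hx : ‖x‖ = 1) (he : ‖e‖ = 1)
    {a : ℝ} (ha : a < π / 2) :
    (∃ y ∈ geodesicBall e a, ⟪x - e, y⟫ = 0) ↔ angle x e ≤ 2 * a := by
  constructor
  · rintro ⟨y, ⟨-, hya⟩, hxy⟩
    calc angle x e ≤ angle x y + angle y e := angle_le_angle_add_angle x y e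
      _ = 2 * angle y e := by
        rw [angle_eq_angle_of_inner_sub_eq_zero (hx.trans he.symm) hxy, two_mul]
      _ ≤ 2 * a := by gcongr
  · intro h
    have he0 : e ≠ 0 := norm_ne_zero_iff.1 (by simp [he])
    have hxe0 : x + e ≠ 0 := fun h0 => by
      rw [eq_neg_of_add_eq_zero_left h0, angle_neg_self_of_nonzero he0] at h
      linarith
    refine ⟨‖x + e‖⁻¹ • (x + e), ⟨by simp [-smul_add, norm_smul, hxe0], ?_⟩, ?_⟩
    · rw [angle_smul_left_of_pos _ _ (inv_pos.2 (norm_pos_iff.2 hxe0)),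
        angle_add_eq_half (hx.trans he.symm) he0]
      linarith
    · rw [real_inner_smul_right, real_inner_comm,
        (real_inner_add_sub_eq_zero_iff x e).2 (hx.trans he.symm), mul_zero]

lemma norm_add_smul_sq_of_inner_eq_zero {p e : E} (hp : ⟪p, e⟫ = 0) (he : ‖e‖ = 1) (c : ℝ) :
    ‖p + c • e‖ ^ 2 = ‖p‖ ^ 2 + c ^ 2 := by
  rw [norm_add_sq_real, real_inner_smul_right, hp, norm_smul, he, norm_eq_abs, mul_one, sq_abs]
  ring

lemma inner_add_smul_self_of_inner_eq_zero {p e : E} (hp : ⟪p, e⟫ = 0) (he : ‖e‖ = 1) (c : ℝ) :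
    ⟪p + c • e, e⟫ = c := by
  rw [inner_add_left, hp, real_inner_smul_left, real_inner_self_eq_norm_sq, he]
  ring

lemma inner_sub_inner_smul_self {e : E} (he : ‖e‖ = 1) (x : E) : ⟪x - ⟪x, e⟫ • e, e⟫ = 0 := by
  rw [inner_sub_left, real_inner_smul_left, real_inner_self_eq_norm_sq, he]
  ring

lemma norm_sub_inner_smul_sq_add_inner_sq {e : E} (he : ‖e‖ = 1) (x : E) :
    ‖x - ⟪x, e⟫ • e‖ ^ 2 + ⟪x, e⟫ ^ 2 = ‖x‖ ^ 2 := by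
  rw [← norm_add_smul_sq_of_inner_eq_zero (inner_sub_inner_smul_self he x) he, sub_add_cancel]

lemma abs_sqrt_add_sq_sub_sqrt_add_sq_le {c : ℝ} (hc : 0 ≤ c) (a b : ℝ) :
    |√(c + a ^ 2) - √(c + b ^ 2)| ≤ |a - b| := by
  have h := abs_norm_sub_norm_le (!₂[√c, a]) (!₂[√c, b])
  simpa [EuclideanSpace.norm_eq, sq_sqrt hc, sqrt_sq_eq_abs] using h

/-- The map shrinking the orthogonal projection to `eᗮ` by the factor `ρ` and lifting the result
vertically so that a point of the unit sphere lands in its hemisphere centred at `e`. -/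
def hemisphereContraction (e : E) (ρ : ℝ) (x : E) : E :=
  ρ • (x - ⟪x, e⟫ • e) + √(1 - ρ ^ 2 + (ρ * ⟪x, e⟫) ^ 2) • e

lemma lipschitzWith_hemisphereContraction {e : E} (he : ‖e‖ = 1) {ρ : ℝ} (hρ : 0 ≤ ρ)
    (hρ1 : ρ ≤ 1) : LipschitzWith ρ.toNNReal (hemisphereContraction e ρ) := by
  refine LipschitzWith.of_dist_le_mul fun x y => ?_
  let h (x : E) : ℝ := √(1 - ρ ^ 2 + (ρ * ⟪x, e⟫) ^ 2)
  have hheight : |h x - h y| ≤ |ρ * ⟪x - y, e⟫| := by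
    rw [inner_sub_left, mul_sub]
    exact abs_sqrt_add_sq_sub_sqrt_add_sq_le (by nlinarith) _ _
  have hdiff : hemisphereContraction e ρ x - hemisphereContraction e ρ y =
      ρ • ((x - y) - ⟪x - y, e⟫ • e) + (h x - h y) • e := by
    simp only [hemisphereContraction, h, inner_sub_left]
    module
  rw [dist_eq_norm, dist_eq_norm, coe_toNNReal ρ hρ, ← sq_le_sq₀ (by positivity) (by positivity)]
  calc ‖hemisphereContraction e ρ x - hemisphereContraction e ρ y‖ ^ 2
      = (ρ * ‖(x - y) - ⟪x - y, e⟫ • e‖) ^ 2 + (h x - h y) ^ 2 := by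
        rw [hdiff, norm_add_smul_sq_of_inner_eq_zero _ he, norm_smul, norm_of_nonneg hρ]
        rw [real_inner_smul_left, inner_sub_inner_smul_self he, mul_zero]
    _ ≤ (ρ * ‖(x - y) - ⟪x - y, e⟫ • e‖) ^ 2 + (ρ * ⟪x - y, e⟫) ^ 2 := by
        gcongr 1
        exact sq_le_sq.2 hheight
    _ = (ρ * ‖x - y‖) ^ 2 := by
        rw [mul_pow, mul_pow, mul_pow, ← norm_sub_inner_smul_sq_add_inner_sq he (x - y)]
        ring

lemma norm_sub_inner_smul_eq_sin_angle {x e : E} (hx : ‖x‖ = 1) (he : ‖e‖ = 1) :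
    ‖x - ⟪x, e⟫ • e‖ = sin (angle x e) := by
  rw [← sq_eq_sq₀ (norm_nonneg _) (sin_angle_nonneg x e), sin_sq,
    ← inner_eq_cos_angle_of_norm_eq_one hx he, eq_sub_iff_add_eq,
    norm_sub_inner_smul_sq_add_inner_sq he, hx, one_pow]

lemma geodesicBall_subset_image_hemisphereContraction {e : E} (he : ‖e‖ = 1) {ρ : ℝ} (hρ : 0 < ρ)
    (hρ1 : ρ ≤ 1) :
    geodesicBall e ρ ⊆ hemisphereContraction e ρ '' Metric.sphere 0 1 := by
  rintro z ⟨hz, hzρ⟩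
  rw [mem_sphere_zero_iff_norm] at hz
  set u := z - ⟪z, e⟫ • e with hu
  have hsum : ‖u‖ ^ 2 + ⟪z, e⟫ ^ 2 = 1 := by
    rw [norm_sub_inner_smul_sq_add_inner_sq he, hz, one_pow]
  have huρ : ‖u‖ ≤ ρ := by
    rw [norm_sub_inner_smul_eq_sin_angle hz he]
    exact (sin_le (angle_nonneg z e)).trans hzρ
  have hze : 0 ≤ ⟪z, e⟫ := by
    rw [inner_eq_cos_angle_of_norm_eq_one hz he]
    exact cos_nonneg_of_neg_pi_div_two_le_of_le (by linarith [pi_pos, angle_nonneg z e])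
      (by linarith [pi_gt_three])
  have horth : ⟪ρ⁻¹ • u, e⟫ = 0 := by
    rw [real_inner_smul_left, inner_sub_inner_smul_self he, mul_zero]
  set s := √(1 - ‖ρ⁻¹ • u‖ ^ 2)
  have hs2 : s ^ 2 = 1 - ‖ρ⁻¹ • u‖ ^ 2 := by
    refine sq_sqrt (sub_nonneg.2 (pow_le_one₀ (norm_nonneg _) ?_))
    rwa [norm_smul, norm_of_nonneg (by positivity), inv_mul_le_one₀ hρ]
  have hlift : √(1 - ρ ^ 2 + (ρ * s) ^ 2) = ⟪z, e⟫ := by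
    rw [← sqrt_sq hze, mul_pow, hs2, norm_smul, norm_of_nonneg (by positivity)]
    congr 1
    field_simp
    linarith
  refine ⟨ρ⁻¹ • u + s • e, ?_, ?_⟩
  · rw [mem_sphere_zero_iff_norm, ← sq_eq_sq₀ (norm_nonneg _) zero_le_one,
      norm_add_smul_sq_of_inner_eq_zero horth he, hs2]
    ring
  · rw [hemisphereContraction, inner_add_smul_self_of_inner_eq_zero horth he, hlift,
      add_sub_cancel_right, smul_inv_smul₀ hρ.ne', hu, sub_add_cancel]

lemma hausdorffMeasure_geodesicBall_le [MeasurableSpace E] [BorelSpace E] {s : ℝ} (hs : 0 ≤ s)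
    {e : E} (he : ‖e‖ = 1) {ρ : ℝ} (hρ : 0 < ρ) :
    μH[s] (geodesicBall e ρ) ≤ ENNReal.ofReal ρ ^ s * μH[s] (Metric.sphere (0 : E) 1) := by
  rcases le_total ρ 1 with hρ1 | hρ1
  · exact (measure_mono (geodesicBall_subset_image_hemisphereContraction he hρ hρ1)).trans
      ((lipschitzWith_hemisphereContraction he hρ.le hρ1).hausdorffMeasure_image_le hs _)
  · calc μH[s] (geodesicBall e ρ) ≤ μH[s] (Metric.sphere (0 : E) 1) :=
          measure_mono (geodesicBall_subset_sphere e ρ)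
      _ ≤ ENNReal.ofReal ρ ^ s * μH[s] (Metric.sphere (0 : E) 1) :=
          le_mul_of_one_le_left' (by
            simpa using ENNReal.rpow_le_rpow (ENNReal.one_le_ofReal.2 hρ1) hs)

lemma angle_eq_two_mul_arcsin {x y : E} (hx : ‖x‖ = 1) (hy : ‖y‖ = 1) :
    angle x y = 2 * arcsin (dist x y / 2) := by
  have hchord : dist x y / 2 = sin (angle x y / 2) := by
    rw [← sq_eq_sq₀ (by positivity) (sin_nonneg_of_nonneg_of_le_pi
      (by linarith [angle_nonneg x y]) (by linarith [angle_le_pi x y, pi_pos])),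
      sin_sq_eq_half_sub, mul_div_cancel₀ _ two_ne_zero,
      ← inner_eq_cos_angle_of_norm_eq_one hx hy, div_pow, dist_eq_norm, norm_sub_sq_real, hx, hy]
    ring
  rw [hchord, arcsin_sin (by linarith [angle_nonneg x y, pi_pos]) (by linarith [angle_le_pi x y])]
  ring

lemma exists_angle_le_mul_dist {C : ℝ≥0} (hC : 1 < C) :
    ∃ δ > 0, ∀ x y : E, ‖x‖ = 1 → ‖y‖ = 1 → dist x y ≤ δ → angle x y ≤ C * dist x y := by
  have hderiv : HasStrictDerivAt arcsin 1 0 := by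
    simpa using hasStrictDerivAt_arcsin (x := 0) (by norm_num) (by norm_num)
  obtain ⟨U, hU, hlip⟩ := hderiv.hasStrictFDerivAt.exists_lipschitzOnWith_of_nnnorm_lt C (by simpa)
  obtain ⟨δ, hδ, hball⟩ := Metric.nhds_basis_closedBall.mem_iff.1 hU
  refine ⟨2 * δ, by positivity, fun x y hx hy hxy => ?_⟩
  have hmem : dist x y / 2 ∈ U :=
    hball (by rw [mem_closedBall_zero_iff, norm_of_nonneg (by positivity)]; linarith)
  have h := hlip.dist_le_mul _ hmem 0 (mem_of_mem_nhds hU)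
  rw [arcsin_zero, dist_zero_right, dist_zero_right,
    norm_of_nonneg (by positivity : 0 ≤ dist x y / 2)] at h
  rw [angle_eq_two_mul_arcsin hx hy]
  linarith [le_norm_self (arcsin (dist x y / 2))]

lemma dist_angle_le_angle (x y e : E) : dist (angle x e) (angle y e) ≤ angle x y := by
  have h1 := angle_le_angle_add_angle x y e
  have h2 := angle_le_angle_add_angle y x e
  rw [angle_comm y x] at h2
  rw [Real.dist_eq, abs_sub_le_iff]
  constructor <;> linarith

lemma exists_edist_angle_le_mul_edist (e : E) {C : ℝ≥0} (hC : 1 < C) :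
    ∃ δ : ℝ≥0∞, δ ≠ 0 ∧ ∀ x ∈ Metric.sphere (0 : E) 1, ∀ y ∈ Metric.sphere (0 : E) 1,
      edist x y ≤ δ → edist (angle x e) (angle y e) ≤ C * edist x y := by
  obtain ⟨δ, hδ, hangle⟩ := exists_angle_le_mul_dist (E := E) hC
  refine ⟨ENNReal.ofReal δ, by simpa using hδ, fun x hx y hy hxy => ?_⟩
  rw [mem_sphere_zero_iff_norm] at hx hy
  rw [edist_dist, ENNReal.ofReal_le_ofReal_iff hδ.le] at hxy
  rw [edist_dist, edist_dist, ← ENNReal.ofReal_coe_nnreal, ← ENNReal.ofReal_mul C.coe_nonneg]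
  exact ENNReal.ofReal_le_ofReal ((dist_angle_le_angle x y e).trans (hangle x y hx hy hxy))

lemma exists_linearIsometry_euclideanSpace_inner_eq_zero {n : ℕ}
    (hn : Module.finrank ℝ E = n + 1) {e : E} (he : e ≠ 0) :
    ∃ ι : EuclideanSpace ℝ (Fin n) →ₗᵢ[ℝ] E, ∀ v, ⟪ι v, e⟫ = 0 := by
  have : FiniteDimensional ℝ E := .of_finrank_pos (by lia)
  have : Fact (Module.finrank ℝ E = n + 1) := ⟨hn⟩
  let b := OrthonormalBasis.fromOrthogonalSpanSingleton (𝕜 := ℝ) n he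
  exact ⟨(ℝ ∙ e)ᗮ.subtypeₗᵢ.comp b.repr.symm.toLinearIsometry, fun v =>
    Submodule.mem_orthogonal_singleton_iff_inner_left.1 (b.repr.symm v).2⟩

variable {F : Type*} [NormedAddCommGroup F] [InnerProductSpace ℝ F] [MeasurableSpace E]
  [BorelSpace E] [MeasurableSpace F] [BorelSpace F]

open scoped Pointwise in
lemma ofReal_sin_rpow_mul_hausdorffMeasure_sphere_le {s : ℝ} (hs : 0 ≤ s) {e : E} (he : ‖e‖ = 1)
    (ι : F →ₗᵢ[ℝ] E) (hι : ∀ v, ⟪ι v, e⟫ = 0) {t : ℝ} (ht : 0 < t) (ht' : t < π) :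
    ENNReal.ofReal (sin t) ^ s * μH[s] (Metric.sphere (0 : F) 1) ≤
      μH[s] {x ∈ Metric.sphere (0 : E) 1 | angle x e = t} := by
  have hsin : 0 < sin t := sin_pos_of_pos_of_lt_pi ht ht'
  let φ (v : F) : E := ι v + cos t • e
  have hφ : Isometry φ := (IsometryEquiv.addRight (cos t • e)).isometry.comp ι.isometry
  have himage : φ '' (sin t • Metric.sphere (0 : F) 1) ⊆
      {x ∈ Metric.sphere (0 : E) 1 | angle x e = t} := by
    rintro _ ⟨_, ⟨v, hv, rfl⟩, rfl⟩
    have hnorm : ‖φ (sin t • v)‖ = 1 := by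
      rw [← sq_eq_sq₀ (norm_nonneg _) zero_le_one, norm_add_smul_sq_of_inner_eq_zero (hι _) he,
        ι.norm_map, norm_smul, mem_sphere_zero_iff_norm.1 hv, norm_of_nonneg hsin.le, mul_one,
        sin_sq_add_cos_sq, one_pow]
    refine ⟨mem_sphere_zero_iff_norm.2 hnorm, ?_⟩
    rw [angle, inner_add_smul_self_of_inner_eq_zero (hι _) he, hnorm, he, mul_one, div_one,
      arccos_cos ht.le ht'.le]
  calc ENNReal.ofReal (sin t) ^ s * μH[s] (Metric.sphere (0 : F) 1)
      = μH[s] (sin t • Metric.sphere (0 : F) 1) := by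
        rw [Measure.hausdorffMeasure_smul₀ hs hsin.ne', ENNReal.smul_def, smul_eq_mul,
          ENNReal.coe_rpow_of_nonneg _ hs, ← enorm_eq_nnnorm, Real.enorm_of_nonneg hsin.le]
    _ = μH[s] (φ '' (sin t • Metric.sphere (0 : F) 1)) :=
        (hφ.hausdorffMeasure_image (Or.inl hs) _).symm
    _ ≤ _ := measure_mono himage

lemma lintegral_ofReal_sin_rpow_mul_hausdorffMeasure_sphere_le {s : ℝ} (hs : 0 ≤ s) {e : E}
    (he : ‖e‖ = 1) (ι : F →ₗᵢ[ℝ] E) (hι : ∀ v, ⟪ι v, e⟫ = 0) {r : ℝ} (hr : r ≤ π) :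
    ∫⁻ t in Set.Ioo 0 r, ENNReal.ofReal (sin t) ^ s * μH[s] (Metric.sphere (0 : F) 1) ≤
      μH[s + 1] (geodesicBall e r) := by
  calc ∫⁻ t in Set.Ioo 0 r, ENNReal.ofReal (sin t) ^ s * μH[s] (Metric.sphere (0 : F) 1)
      ≤ ∫⁻ t in Set.Ioo 0 r, μH[s] (geodesicBall e r ∩ (fun x => angle x e) ⁻¹' {t}) := by
        refine setLIntegral_mono' measurableSet_Ioo fun t ht => ?_
        refine (ofReal_sin_rpow_mul_hausdorffMeasure_sphere_le hs he ι hι ht.1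
          (ht.2.trans_le hr)).trans (measure_mono ?_)
        rintro x ⟨hx, hxt⟩
        exact ⟨⟨hx, hxt.trans_le ht.2.le⟩, hxt⟩
    _ ≤ ∫⁻ t, μH[s] (geodesicBall e r ∩ (fun x => angle x e) ⁻¹' {t}) :=
        setLIntegral_le_lintegral _ _
    _ ≤ μH[s + 1] (geodesicBall e r) := by
        refine lintegral_hausdorffMeasure_fiber_le_of_forall_one_lt hs one_pos
          (fun B => by simpa using volume_le_diam B) fun C hC => ?_
        obtain ⟨δ, hδ, hlip⟩ := exists_edist_angle_le_mul_edist e hC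
        exact ⟨δ, hδ, fun x hx y hy => hlip x hx.1 y hy.1⟩

lemma ofReal_integral_sin_pow_mul_hausdorffMeasure_sphere_le (n : ℕ) {e : E} (he : ‖e‖ = 1)
    (ι : F →ₗᵢ[ℝ] E) (hι : ∀ v, ⟪ι v, e⟫ = 0) {r : ℝ} (hr : 0 ≤ r) (hr' : r ≤ π) :
    ENNReal.ofReal (∫ t in (0 : ℝ)..r, sin t ^ n) * μH[n] (Metric.sphere (0 : F) 1) ≤
      μH[(n : ℝ) + 1] (geodesicBall e r) := by
  have hnonneg : ∀ t ∈ Set.Ioo 0 r, 0 ≤ sin t := fun t ht =>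
    sin_nonneg_of_nonneg_of_le_pi ht.1.le (ht.2.le.trans hr')
  refine le_of_eq_of_le ?_ (lintegral_ofReal_sin_rpow_mul_hausdorffMeasure_sphere_le n.cast_nonneg
    he ι hι hr')
  rw [lintegral_mul_const _ (by fun_prop), intervalIntegral.integral_of_le hr,
    integral_Ioc_eq_integral_Ioo, ofReal_integral_eq_lintegral_ofReal]
  · congr 1
    exact setLIntegral_congr_fun measurableSet_Ioo fun t ht => by
      simp only [ENNReal.ofReal_pow (hnonneg t ht), ENNReal.rpow_natCast]
  · exact (by fun_prop : Continuous fun t => sin t ^ n).integrableOn_Icc.mono_set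
      Set.Ioo_subset_Icc_self
  · exact (ae_restrict_iff' measurableSet_Ioo).2
      (Eventually.of_forall fun t ht => pow_nonneg (hnonneg t ht) _)

end UnitSphere

section EuclideanSphere

variable {d : ℕ} {e : Esp d}

lemma mem_uSphere {x : Esp d} : x ∈ uSphere d ↔ ‖x‖ = 1 := mem_sphere_zero_iff_norm

lemma cap_eq_geodesicBall (he : e ∈ uSphere d) (α : ℝ) : cap e α = geodesicBall e α := by
  ext x
  refine and_congr_right fun hx => ?_
  rw [geo, InnerProductGeometry.angle, mem_uSphere.1 hx, mem_uSphere.1 he, mul_one, div_one]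

lemma sigmaMeas_apply (d : ℕ) (A : Set (Esp d)) : sigmaMeas d A = μH[d] (A ∩ uSphere d) :=
  Measure.restrict_apply' Metric.isClosed_sphere.measurableSet

lemma sigmaMeas_uSphere (d : ℕ) : sigmaMeas d (uSphere d) = μH[d] (Metric.sphere (0 : Esp d) 1) :=
  Measure.restrict_apply_self _ _

lemma sigmaMeas_cap (he : e ∈ uSphere d) (α : ℝ) :
    sigmaMeas d (cap e α) = μH[d] (geodesicBall e α) := by
  rw [sigmaMeas_apply, cap_eq_geodesicBall he, uSphere,
    Set.inter_eq_self_of_subset_left (geodesicBall_subset_sphere e α)]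

lemma sigmaMeas_ne_top (A : Set (Esp d)) : sigmaMeas d A ≠ ∞ := by
  rw [sigmaMeas_apply]
  exact measure_ne_top_of_subset Set.inter_subset_right
    (hausdorffMeasure_sphere_lt_top (by simp)).ne

lemma Utilde_cap (he : e ∈ uSphere d) {a : ℝ} (ha : a < π / 2) :
    Utilde d e (cap e a) = (sigmaMeas d (cap e (2 * a))).toReal := by
  have hbisect : {x | ∃ y ∈ cap e a, ⟪x - e, y⟫ = 0} ∩ uSphere d = geodesicBall e (2 * a) := by
    ext x
    rw [cap_eq_geodesicBall he, Set.inter_comm]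
    exact and_congr_right fun hx =>
      exists_mem_geodesicBall_inner_sub_eq_zero_iff (mem_uSphere.1 hx) (mem_uSphere.1 he) ha
  rw [Utilde, sigmaMeas_apply, hbisect, sigmaMeas_cap he]

lemma Dfun_mul_omegaSm_le (hd : 1 ≤ d) (he : e ∈ uSphere d) {r : ℝ} (hr : 0 ≤ r) (hr' : r ≤ π) :
    Dfun d r * omegaSm d ≤ (sigmaMeas d (cap e r)).toReal := by
  have he1 := mem_uSphere.1 he
  obtain ⟨ι, hι⟩ := exists_linearIsometry_euclideanSpace_inner_eq_zero (n := d) (by simp)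
    (norm_ne_zero_iff.1 (he1.trans_ne one_ne_zero))
  have hslice := ofReal_integral_sin_pow_mul_hausdorffMeasure_sphere_le (d - 1) he1 ι hι hr hr'
  rw [Nat.cast_sub hd, Nat.cast_one, sub_add_cancel, ← sigmaMeas_cap he] at hslice
  have hD : 0 ≤ Dfun d r := intervalIntegral.integral_nonneg hr fun t ht =>
    pow_nonneg (sin_nonneg_of_nonneg_of_le_pi ht.1 (ht.2.trans hr')) _
  calc Dfun d r * omegaSm d
      = (ENNReal.ofReal (Dfun d r) *
          μH[(d : ℝ) - 1] (Metric.sphere (0 : EuclideanSpace ℝ (Fin d)) 1)).toReal := by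
        rw [ENNReal.toReal_mul, ENNReal.toReal_ofReal hD, omegaSm]
    _ ≤ (sigmaMeas d (cap e r)).toReal := ENNReal.toReal_mono (sigmaMeas_ne_top _) hslice

lemma two_mul_pow_le_Dfun (hd : 1 ≤ d) {a : ℝ} (ha : 0 < a) (ha' : a ≤ π / 2) :
    2 * (2 / π) ^ (2 * (d - 1)) * a ^ d ≤ Dfun d (2 * a) := by
  simpa only [Nat.sub_add_cancel hd, Dfun] using two_mul_pow_le_integral_sin_pow (d - 1) ha ha'

lemma sigmaMeas_cap_le (he : e ∈ uSphere d) {ρ : ℝ} (hρ : 0 < ρ) :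
    (sigmaMeas d (cap e ρ)).toReal ≤ ρ ^ d * omegaTot d := by
  have hle := hausdorffMeasure_geodesicBall_le (s := d) d.cast_nonneg (mem_uSphere.1 he) hρ
  rw [← sigmaMeas_cap he, ← sigmaMeas_uSphere, ENNReal.rpow_natCast] at hle
  have hfin := sigmaMeas_ne_top (uSphere d)
  refine (ENNReal.toReal_mono (by finiteness) hle).trans_eq ?_
  rw [ENNReal.toReal_mul, ENNReal.toReal_pow, ENNReal.toReal_ofReal hρ.le, omegaTot]

end EuclideanSphere

theorem statement10_general (d : ℕ) (hd : 1 ≤ d) (e : Esp d) (he : e ∈ uSphere d)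
    (a : ℝ) (ha : 0 < a) (ha' : a < π / 2) :
    Utilde d e (cap e a) = (sigmaMeas d (cap e (2 * a))).toReal ∧
    2 * omegaSm d * (2 / π) ^ (2 * (d - 1)) * a ^ d ≤ (sigmaMeas d (cap e (2 * a))).toReal ∧
    (sigmaMeas d (cap e (2 * a))).toReal ≤ 2 ^ d * omegaTot d * a ^ d := by
  refine ⟨Utilde_cap he ha', ?_, ?_⟩
  · calc 2 * omegaSm d * (2 / π) ^ (2 * (d - 1)) * a ^ d
        = 2 * (2 / π) ^ (2 * (d - 1)) * a ^ d * omegaSm d := by ring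
      _ ≤ Dfun d (2 * a) * omegaSm d := mul_le_mul_of_nonneg_right
          (two_mul_pow_le_Dfun hd ha ha'.le) ENNReal.toReal_nonneg
      _ ≤ (sigmaMeas d (cap e (2 * a))).toReal :=
          Dfun_mul_omegaSm_le hd he (by linarith) (by linarith)
  · calc (sigmaMeas d (cap e (2 * a))).toReal ≤ (2 * a) ^ d * omegaTot d :=
          sigmaMeas_cap_le he (by linarith)
      _ = 2 ^ d * omegaTot d * a ^ d := by ring

/-- formula (5.1). For `e ∈ S^d` and `a ∈ (0,π/2)`:
`Ũ_e(B(e,a)) = σ_d(B(e,2a))` and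
`2 ω_d (2/π)^{2(d-1)} a^d ≤ σ_d(B(e,2a)) ≤ 2^d ω_{d+1} a^d`. -/
theorem statement10 (d : ℕ) (hd : 2 ≤ d) (e : Esp d) (he : e ∈ uSphere d)
    (a : ℝ) (ha : 0 < a) (ha' : a < π / 2) :
    Utilde d e (cap e a) = (sigmaMeas d (cap e (2 * a))).toReal ∧
    2 * omegaSm d * (2 / π) ^ (2 * (d - 1)) * a ^ d ≤ (sigmaMeas d (cap e (2 * a))).toReal ∧
    (sigmaMeas d (cap e (2 * a))).toReal ≤ 2 ^ d * omegaTot d * a ^ d :=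
  statement10_general d (by omega) e he a ha ha'

end
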